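/- Classification of central extensions of the asymptotic symmetry algebra of the generalized Brown-Henneaux boundary conditions: Let K⁺, K⁻ : ℤ×ℤ → ℂ be antisymmetric, K^{+-} : ℤ×ℤ → ℂ, V⁺, V⁻ : ℤ×ℤ → ℂ, V^{+-}, V^{-+} : ℤ×ℤ → ℂ, W⁺, W⁻ : ℤ×ℤ → ℂ antisymmetric, W^{+-} : ℤ×ℤ → ℂ, X⁺, X⁻ : ℤ → ℂ and Y⁺, Y⁻ : ℤ → ℂ. Suppose that for each chirality σ ∈ {+,−} and all m, n, p ∈ ℤ: (1) (m−n)Kσ(m+n,p) + (n−p)Kσ(n+p,m) + (p−m)Kσ(p+m,n) = 0; (2) (m−n)K^{+-}(m+n,p) = 0; (3) (m−n)Vσ(m+n,p) + p(Vσ(m,n+p) − Vσ(n,m+p)) = 0; (4) (m−n)V^{σ,−σ}(m+n,p) = 0; (5) (m−n)Xσ(m+n) − (i/2)Vσ(m,n) + (i/2)Vσ(n,m) = 0; (6) −n·Wσ(m+n,p) + p·Wσ(m+p,n) = 0; (7) −n·W^{+-}(m+n,p) = 0; (8) −n·Yσ(m+n) − (i/2)Wσ(m,n) = 0; together with the normalizations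 Kσ(0,m) = 0 for all m, Kσ(1,−1) = 0, Vσ(0,n) = 0 for all n ≠ 0, X⁺(0) + X⁻(0) = 0, and Y⁺(0) = Y⁻(0). Then there exist complex numbers c⁺, c⁻, d⁺, d⁻, d₀, k such that for all m, n ∈ ℤ: Kσ(m,n) = (cσ/12)(m³−m)·δ_{m+n,0}; K^{+-}(m,n) = 0; Vσ(m,n) = (dσ·m² − σ·i·d₀·m(m+2))·δ_{m+n,0}; V^{σ,−σ}(m,n) = 0; Wσ(m,n) = k·m·δ_{m+n,0}; W^{+-}(m,n) = 0; Xσ(m) = σ·d₀·δ_{m,0}; Yσ(m) = (i/2)·k·δ_{m,0} (here σ is interpreted as ±1 in the formulas). -/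

import Mathlib

/-- The sign of a chirality: `+` is `true` (interpreted as `1`), `-` is `false`
(interpreted as `-1`). -/
noncomputable def sgn (σ : Bool) : ℂ := if σ then 1 else -1


/-- The coefficient function in the mixed bracket is a quadratic polynomial. -/
theorem quad_aux (f : ℤ → ℂ) (h0 : f 0 = 0)
    (h : ∀ m n : ℤ, ((m : ℂ) - n) * f (m + n) = ((m : ℂ) + n) * (f m - f n)) :
    ∃ a b : ℂ, ∀ m : ℤ, f m = a * m + b * (m : ℂ) ^ 2 := by
  obtain ⟨a, b, h1, h2⟩ : ∃ a b : ℂ, f 1 = a + b ∧ f 2 = 2 * a + 4 * b :=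
    ⟨2 * f 1 - f 2 / 2, f 2 / 2 - f 1, by ring, by ring⟩
  have hm1 : f (-1) = -a + b := by
    have := h 2 (-1)
    norm_num at this
    rw [h1, h2] at this
    linear_combination this
  have hpos : ∀ k : ℕ, f (k + 2 : ℤ) = a * (k + 2) + b * ((k : ℂ) + 2) ^ 2 := by
    intro k
    induction k with
    | zero => norm_num; rw [h2]; ring
    | succ k ih =>
      have e := h (k + 2) 1
      rw [ih, h1] at e
      have hne : (k : ℂ) + 1 ≠ 0 := by exact_mod_cast Nat.succ_ne_zero k
      have e2 : ((k + 1 : ℕ) + 2 : ℤ) = (k : ℤ) + 2 + 1 := by push_cast; ring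
      rw [e2]
      apply mul_left_cancel₀ hne
      push_cast at e ⊢
      linear_combination e
  have hneg : ∀ k : ℕ, f (-(k + 1) : ℤ) = -a * (k + 1) + b * ((k : ℂ) + 1) ^ 2 := by
    intro k
    induction k with
    | zero => norm_num; rw [hm1]
    | succ k ih =>
      have e := h (-(k + 2)) 1
      have e3 : (-(k + 2) + 1 : ℤ) = -(k + 1) := by ring
      rw [e3, ih, h1] at e
      have hne : (k : ℂ) + 1 ≠ 0 := by exact_mod_cast Nat.succ_ne_zero k
      have e2 : (-((k + 1 : ℕ) + 1) : ℤ) = -((k : ℤ) + 2) := by push_cast; ring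
      rw [e2]
      apply mul_left_cancel₀ hne
      push_cast at e ⊢
      linear_combination e
  refine ⟨a, b, fun m => ?_⟩
  rcases lt_trichotomy m 0 with hm | hm | hm
  · obtain ⟨k, rfl⟩ : ∃ k : ℕ, m = -(k + 1) := ⟨(-m - 1).toNat, by omega⟩
    rw [hneg]; push_cast; ring
  · subst hm; simp [h0]
  · by_cases hm' : m = 1
    · subst hm'; rw [h1]; push_cast; ring
    · obtain ⟨k, rfl⟩ : ∃ k : ℕ, m = k + 2 := ⟨(m - 2).toNat, by omega⟩
      rw [hpos]; push_cast; ring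

/-- The Gelfand-Fuks cocycle is the only normalized one. -/
theorem cubic_aux (g : ℤ → ℂ) (h0 : g 0 = 0) (h1 : g 1 = 0)
    (hodd : ∀ m, g (-m) = - g m)
    (h : ∀ m n : ℤ, ((m : ℂ) - n) * g (m + n)
      = ((m : ℂ) + 2 * n) * g m - (2 * (m : ℂ) + n) * g n) :
    ∃ c : ℂ, ∀ m : ℤ, g m = c / 12 * ((m : ℂ) ^ 3 - m) := by
  refine ⟨2 * g 2, ?_⟩
  have hpos : ∀ k : ℕ, g (k + 2 : ℤ) = 2 * g 2 / 12 * (((k : ℂ) + 2) ^ 3 - (k + 2)) := by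
    intro k
    induction k with
    | zero => norm_num; ring
    | succ k ih =>
      have e := h (k + 2) 1
      rw [ih, h1] at e
      have hne : (k : ℂ) + 1 ≠ 0 := by exact_mod_cast Nat.succ_ne_zero k
      have e2 : ((k + 1 : ℕ) + 2 : ℤ) = (k : ℤ) + 2 + 1 := by push_cast; ring
      rw [e2]
      apply mul_left_cancel₀ hne
      push_cast at e ⊢
      linear_combination e
  have hnn : ∀ k : ℕ, g k = 2 * g 2 / 12 * ((k : ℂ) ^ 3 - k) := by
    intro k
    rcases k with _ | _ | k
    · simp [h0]
    · simp [h1]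
    · have := hpos k
      have e2 : ((k + 1 + 1 : ℕ) : ℤ) = (k : ℤ) + 2 := by push_cast; ring
      rw [e2, this]; push_cast; ring
  intro m
  obtain ⟨k, rfl | rfl⟩ := m.eq_nat_or_neg
  · simpa using hnn k
  · rw [hodd, hnn]; push_cast; ring

/-- A function killed by all the differences vanishes. -/
theorem zero_aux (F : ℤ → ℤ → ℂ) (h : ∀ m n p : ℤ, ((m : ℂ) - n) * F (m + n) p = 0)
    (m n : ℤ) : F m n = 0 := by
  by_cases hm : m = 0
  · subst hm
    have := h 1 (-1) n
    norm_num at this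
    exact this
  · have := h m 0 n
    simpa [hm] using this

/-- Classification of central extensions of the asymptotic symmetry algebra of the
generalized Brown-Henneaux boundary conditions.  `K σ`, `Kpm`, `V σ`, `Vcross σ`,
`W σ`, `Wpm`, `X σ`, `Y σ` are the central-extension coefficients in the brackets
`[Lσ,Lσ]`, `[L⁺,L⁻]`, `[Lσ,Pσ]`, `[Lσ,P⁻σ]`, `[Pσ,Pσ]`, `[P⁺,P⁻]`, `[Lσ,Q]`,
`[Pσ,Q]` respectively; the hypotheses are the Jacobi-identity constraints together
with the normalizations, and the conclusion is the six-parameter form of the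
general solution (here only the parameters `c⁺, c⁻, d⁺, d⁻, d₀, k` appear). -/
theorem stmt_0
    (K : Bool → ℤ → ℤ → ℂ) (Kpm : ℤ → ℤ → ℂ)
    (V : Bool → ℤ → ℤ → ℂ) (Vcross : Bool → ℤ → ℤ → ℂ)
    (W : Bool → ℤ → ℤ → ℂ) (Wpm : ℤ → ℤ → ℂ)
    (X : Bool → ℤ → ℂ) (Y : Bool → ℤ → ℂ)
    (hKanti : ∀ σ (m n : ℤ), K σ m n = - K σ n m)
    (hWanti : ∀ σ (m n : ℤ), W σ m n = - W σ n m)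
    (h1 : ∀ σ (m n p : ℤ),
      ((m : ℂ) - n) * K σ (m + n) p + ((n : ℂ) - p) * K σ (n + p) m
        + ((p : ℂ) - m) * K σ (p + m) n = 0)
    (h2 : ∀ m n p : ℤ, ((m : ℂ) - n) * Kpm (m + n) p = 0)
    (h3 : ∀ σ (m n p : ℤ),
      ((m : ℂ) - n) * V σ (m + n) p + (p : ℂ) * (V σ m (n + p) - V σ n (m + p)) = 0)
    (h4 : ∀ σ (m n p : ℤ), ((m : ℂ) - n) * Vcross σ (m + n) p = 0)
    (h5 : ∀ σ (m n : ℤ),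
      ((m : ℂ) - n) * X σ (m + n) - Complex.I / 2 * V σ m n
        + Complex.I / 2 * V σ n m = 0)
    (h6 : ∀ σ (m n p : ℤ), -(n : ℂ) * W σ (m + n) p + (p : ℂ) * W σ (m + p) n = 0)
    (h7 : ∀ m n p : ℤ, -(n : ℂ) * Wpm (m + n) p = 0)
    (h8 : ∀ σ (m n : ℤ), -(n : ℂ) * Y σ (m + n) - Complex.I / 2 * W σ m n = 0)
    (hK0 : ∀ σ (m : ℤ), K σ 0 m = 0)
    (hK1 : ∀ σ, K σ 1 (-1) = 0)
    (hV0 : ∀ σ (n : ℤ), n ≠ 0 → V σ 0 n = 0)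
    (hX0 : X true 0 + X false 0 = 0)
    (hY0 : Y true 0 = Y false 0) :
    ∃ c d : Bool → ℂ, ∃ d0 k : ℂ, ∀ σ (m n : ℤ),
      K σ m n = c σ / 12 * ((m : ℂ) ^ 3 - m) * (if m + n = 0 then 1 else 0) ∧
      Kpm m n = 0 ∧
      V σ m n = (d σ * (m : ℂ) ^ 2 - sgn σ * Complex.I * d0 * m * (m + 2))
          * (if m + n = 0 then 1 else 0) ∧
      Vcross σ m n = 0 ∧
      W σ m n = k * (m : ℂ) * (if m + n = 0 then 1 else 0) ∧
      Wpm m n = 0 ∧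
      X σ m = sgn σ * d0 * (if m = 0 then 1 else 0) ∧
      Y σ m = Complex.I / 2 * k * (if m = 0 then 1 else 0) := by
  have hK : ∀ σ, ∃ c : ℂ, ∀ m n : ℤ, K σ m n
      = c / 12 * ((m : ℂ) ^ 3 - m) * (if m + n = 0 then 1 else 0) := by
    intro σ
    obtain ⟨c, hc⟩ := cubic_aux (fun m => K σ m (-m)) (hK0 σ _) (hK1 σ)
      (fun m => by simp only [neg_neg]; exact hKanti σ _ _)
      (fun m n => by
        have e := h1 σ m n (-(m + n))
        have e1 : n + -(m + n) = -m := by ring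
        have e2 : -(m + n) + m = -n := by ring
        rw [e1, e2, hKanti σ (-m) m, hKanti σ (-n) n] at e
        push_cast at e
        linear_combination e)
    refine ⟨c, fun m n => ?_⟩
    by_cases hmn : m + n = 0
    · obtain rfl : n = -m := by omega
      simpa using hc m
    · have e := h1 σ m n 0
      rw [hKanti σ (m + n) 0, hK0, add_zero, zero_add, hKanti σ n m] at e
      have hne : (m : ℂ) + n ≠ 0 := by exact_mod_cast hmn
      rw [if_neg hmn, mul_zero]
      apply mul_left_cancel₀ hne
      push_cast at e
      linear_combination -e
  have hVoff : ∀ σ (m n : ℤ), m + n ≠ 0 → V σ m n = 0 := by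
    intro σ m n hmn
    have e := h3 σ 0 m n
    rw [zero_add, zero_add, hV0 σ _ hmn] at e
    have hne : (m : ℂ) + n ≠ 0 := by exact_mod_cast hmn
    apply mul_left_cancel₀ hne
    push_cast at e
    linear_combination -e
  have hV00 : ∀ σ, V σ 0 0 = 0 := by
    intro σ
    have e := h3 σ 0 (-1) 1
    norm_num at e
    exact e
  have hV : ∀ σ, ∃ b : ℂ, ∀ m : ℤ, V σ m (-m)
      = -2 * Complex.I * X σ 0 * m + b * (m : ℂ) ^ 2 := by
    intro σ
    obtain ⟨a, b, hab⟩ := quad_aux (fun m => V σ m (-m)) (hV00 σ)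
      (fun m n => by
        have e := h3 σ m n (-(m + n))
        have e1 : n + -(m + n) = -m := by ring
        have e2 : m + -(m + n) = -n := by ring
        rw [e1, e2] at e
        push_cast at e
        linear_combination e)
    have e := h5 σ 1 (-1)
    have ea := hab 1
    have eb := hab (-1)
    simp only [neg_neg] at ea eb
    rw [ea, eb] at e
    norm_num at e
    have ha : a = -2 * Complex.I * X σ 0 := by
      linear_combination Complex.I * e + a * Complex.I_sq
    exact ⟨b, fun m => by rw [← ha]; exact hab m⟩
  have hXoff : ∀ σ (m : ℤ), m ≠ 0 → X σ m = 0 := by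
    intro σ m hm
    have e := h5 σ m 0
    rw [hVoff σ m 0 (by simpa using hm), hVoff σ 0 m (by simpa using hm)] at e
    simpa [hm] using e
  have hWY : ∀ σ (m n : ℤ), W σ m n = 2 * Complex.I * n * Y σ (m + n) := by
    intro σ m n
    linear_combination 2 * Complex.I * h8 σ m n + W σ m n * Complex.I_sq
  have hYoff : ∀ σ (m : ℤ), m ≠ 0 → Y σ m = 0 := by
    intro σ m hm
    have e := hWanti σ m 0
    rw [hWY, hWY] at e
    simpa [hm] using e
  have hX : ∀ σ, X σ 0 = sgn σ * X true 0 := by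
    intro σ
    cases σ
    · simp only [sgn]; norm_num; linear_combination hX0
    · simp [sgn]
  have hY : ∀ σ, Y σ 0 = Y true 0 := by
    intro σ
    cases σ
    · exact hY0.symm
    · rfl
  choose c hc using hK
  choose b hb using hV
  refine ⟨c, fun σ => b σ + sgn σ * Complex.I * X true 0, X true 0,
    -2 * Complex.I * Y true 0, fun σ m n => ⟨hc σ m n, zero_aux Kpm h2 m n, ?_,
      zero_aux (Vcross σ) (h4 σ) m n, ?_, ?_, ?_, ?_⟩⟩
  · by_cases hmn : m + n = 0
    · obtain rfl : n = -m := by omega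
      rw [hb, hX, if_pos hmn]; ring
    · rw [hVoff σ m n hmn, if_neg hmn, mul_zero]
  · rw [hWY]
    by_cases hmn : m + n = 0
    · obtain rfl : n = -m := by omega
      rw [if_pos hmn, hmn, hY]; push_cast; ring
    · rw [hYoff σ _ hmn, if_neg hmn, mul_zero, mul_zero]
  · have e := h7 (m - 1) 1 n
    simpa using e
  · by_cases hm : m = 0
    · subst hm; rw [if_pos rfl, hX]; ring
    · rw [hXoff σ m hm, if_neg hm, mul_zero]
  · by_cases hm : m = 0
    · subst hm; rw [if_pos rfl, hY]; linear_combination (Y true 0) * Complex.I_sq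
    · rw [hYoff σ m hm, if_neg hm, mul_zero]
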